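/- arXiv:2212.06670 — 3 statements merged into one kernel-verified Lean document; each statement's English description precedes it below -/
import Mathlib

section
/- Let (W, S) be a Coxeter system with Bruhat order ≤. For any x, y ∈ W, the set {x'·y' : x' ≤ x, y' ≤ y} contains a unique maximal element with respect to the Bruhat order; moreover this element equals the unique maximal element of {x·y' : y' ≤ y} and the unique maximal element of {x'·y : x' ≤ x}. -/
namespace CoxeterSystem

variable {B W : Type*} [Group W] {M : CoxeterMatrix B} (cs : CoxeterSystem M W)

/-- The Bruhat order on a Coxeter group, defined by the subword property:
`u ≤ v` if and only if some reduced word for `u` is a subword of some reduced word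
for `v`. -/
def BruhatLE (u v : W) : Prop :=
  ∃ ω ω' : List B, cs.IsReduced ω' ∧ v = cs.wordProd ω' ∧
    ω.Sublist ω' ∧ cs.IsReduced ω ∧ u = cs.wordProd ω

end CoxeterSystem

/-!
The reflection representation of `W` on pairs of a group element and a sign shows that a reflection
`t` is a right inversion of `w` exactly when it occurs an odd number of times in the right inversion
sequence of any word for `w`. This yields the strong exchange property, and also that right
multiplication by a simple reflection `s` preserves every relation `v * t < v` with `t ≠ s`. Hence,
replacing an element `w` by the larger of `w` and `w * s` is monotone for the order generated by
these relations, which the strong exchange property identifies with the Bruhat order.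

Starting from `x` and reading a reduced word for `y`, multiply by a letter whenever this increases
the length. Each step takes the larger of two elements, so the result dominates every `x' * y'` with
`x' ≤ x` and `y' ≤ y`; the letters that were used form a subword, so the result is itself of the
form `x * y'`. Inversion preserves the order and exchanges the two factors, which gives the form
`x' * y`.
-/

namespace BruhatOrder

open CoxeterSystem Relation

variable {B W : Type*} [Group W] {M : CoxeterMatrix B} (cs : CoxeterSystem M W)

local prefix:100 "s" => cs.simple
local prefix:100 "π" => cs.wordProd
local prefix:100 "ℓ" => cs.length

/-! ### The strong exchange property -/

open Classical in
/-- The action of the simple reflection `i` in the reflection representation of `W` on pairs of a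
reflection and a sign. Signs are written additively, and the first component is allowed to range
over all of `W`. -/
noncomputable def signedConj (i : B) : Function.End (W × ZMod 2) :=
  fun p ↦ (s i * p.1 * s i, p.2 + if p.1 = s i then 1 else 0)

open Classical in
theorem prod_map_signedConj_smul (ω : List B) (t : W) (ε : ZMod 2) :
    (ω.map (signedConj cs)).prod • (t, ε) =
      (π ω * t * (π ω)⁻¹, ε + ((cs.rightInvSeq ω).count t : ZMod 2)) := by
  induction ω with
  | nil => simp
  | cons i ω ih =>
    have conj_eq_iff : π ω * (t * (π ω)⁻¹) = s i ↔ (π ω)⁻¹ * (s i * π ω) = t := by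
      rw [← mul_assoc, mul_inv_eq_iff_eq_mul, inv_mul_eq_iff_eq_mul, eq_comm]
    rw [List.map_cons, List.prod_cons, mul_smul, ih]
    simp [signedConj, rightInvSeq, wordProd_cons, List.count_cons, conj_eq_iff, mul_assoc,
      add_assoc]

theorem prod_map_reverse_alternatingWord {G : Type*} [Monoid G] (f : B → G) (i j : B) (n : ℕ) :
    ((alternatingWord i j (2 * n)).reverse.map f).prod = (f j * f i) ^ n := by
  induction n with
  | zero => simp [alternatingWord]
  | succ n ih => simp [mul_add, alternatingWord, ← ih, pow_succ', mul_assoc]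

theorem drop_leftInvSeq_alternatingWord (i j : B) :
    (cs.leftInvSeq (alternatingWord i j (2 * M i j))).drop (M i j) =
      (cs.leftInvSeq (alternatingWord i j (2 * M i j))).take (M i j) := by
  -- The `k`-th entry is `s i * (s j * s i) ^ k`, which has period `M i j` in `k`.
  refine List.ext_getElem (by simp [two_mul]) fun k _ hk ↦ ?_
  have hk : k < M i j := (by simpa using hk : k < M i j ∧ _).1
  have half_odd (n : ℕ) : (2 * n + 1) / 2 = n := by lia
  rw [List.getElem_drop, List.getElem_take,
    cs.getElem_leftInvSeq_alternatingWord i j _ _ (by lia),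
    cs.getElem_leftInvSeq_alternatingWord i j _ _ (by lia),
    prod_alternatingWord_eq_mul_pow, prod_alternatingWord_eq_mul_pow, half_odd, half_odd,
    pow_add, simple_mul_simple_pow', one_mul]
  simp

theorem even_count_leftInvSeq_alternatingWord [DecidableEq W] (i j : B) (t : W) :
    Even ((cs.leftInvSeq (alternatingWord i j (2 * M i j))).count t) := by
  rw [← List.take_append_drop (M i j) (cs.leftInvSeq _), drop_leftInvSeq_alternatingWord,
    List.count_append]
  exact ⟨_, rfl⟩

theorem isLiftable_signedConj : M.IsLiftable (signedConj cs) := by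
  classical
  intro i j
  refine eq_of_smul_eq_smul fun (⟨t, ε⟩ : W × ZMod 2) ↦ ?_
  have wordProd_eq_one : π (alternatingWord j i (2 * M i j)) = 1 := by
    simp [prod_alternatingWord_eq_mul_pow]
  have count_eq_zero :
      ((cs.leftInvSeq (alternatingWord j i (2 * M i j))).count t : ZMod 2) = 0 := by
    rw [ZMod.natCast_eq_zero_iff_even, M.symmetric]
    exact even_count_leftInvSeq_alternatingWord cs j i t
  rw [← prod_map_reverse_alternatingWord, prod_map_signedConj_smul, wordProd_reverse,
    wordProd_eq_one, rightInvSeq_reverse, List.count_reverse, count_eq_zero]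
  simp

/-- The reflection representation of `W` on signed elements, used to count occurrences in inversion
sequences modulo two. -/
noncomputable def signedConjHom : W →* Function.End (W × ZMod 2) :=
  cs.lift ⟨signedConj cs, isLiftable_signedConj cs⟩

open Classical in
theorem signedConjHom_wordProd_smul (ω : List B) (t : W) (ε : ZMod 2) :
    signedConjHom cs (π ω) • (t, ε) =
      (π ω * t * (π ω)⁻¹, ε + ((cs.rightInvSeq ω).count t : ZMod 2)) := by
  have map_simple : signedConjHom cs ∘ cs.simple = signedConj cs :=
    funext fun i ↦ cs.lift_apply_simple (isLiftable_signedConj cs) i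
  rw [← prod_map_signedConj_smul, wordProd, map_list_prod, List.map_map, map_simple]

/-- The parity of the number of occurrences of `t` in the right inversion sequence of a word for
`w`. Reading it off the reflection representation makes it independent of the word. -/
noncomputable def inversionParity (w t : W) : ZMod 2 :=
  (signedConjHom cs w • (t, (0 : ZMod 2))).2

open Classical in
theorem inversionParity_wordProd (ω : List B) (t : W) :
    inversionParity cs (π ω) t = ((cs.rightInvSeq ω).count t : ZMod 2) := by
  rw [inversionParity, signedConjHom_wordProd_smul, zero_add]

theorem inversionParity_one (t : W) : inversionParity cs 1 t = 0 := by
  simp [inversionParity]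

open Classical in
theorem inversionParity_simple (i : B) (t : W) :
    inversionParity cs (s i) t = if t = s i then 1 else 0 := by
  rw [← wordProd_singleton, inversionParity_wordProd, rightInvSeq_singleton, List.count_singleton,
    wordProd_singleton]
  simp [eq_comm (a := t)]

theorem inversionParity_mul (u v t : W) :
    inversionParity cs (u * v) t =
      inversionParity cs u (v * t * v⁻¹) + inversionParity cs v t := by
  classical
  obtain ⟨ω, rfl⟩ := cs.wordProd_surjective u
  obtain ⟨ω', rfl⟩ := cs.wordProd_surjective v
  rw [inversionParity, map_mul, mul_smul]
  simp only [signedConjHom_wordProd_smul, inversionParity_wordProd]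
  rw [zero_add, add_comm]

variable {cs}

theorem inversionParity_self {t : W} (ht : cs.IsReflection t) : inversionParity cs t t = 1 := by
  obtain ⟨w, i, rfl⟩ := ht
  have conj_eq : w⁻¹ * (w * s i * w⁻¹) * w⁻¹⁻¹ = s i := by group
  have cancel : inversionParity cs w (s i) + inversionParity cs w⁻¹ (w * s i * w⁻¹) = 0 := by
    rw [← inversionParity_one cs (w * s i * w⁻¹), ← mul_inv_cancel w, inversionParity_mul, conj_eq]
  rw [inversionParity_mul, conj_eq, inversionParity_mul, mul_inv_cancel_right,
    inversionParity_simple, if_pos rfl, add_right_comm, cancel, zero_add]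

theorem mem_rightInvSeq_of_inversionParity_ne_zero {ω : List B} {t : W}
    (h : inversionParity cs (π ω) t ≠ 0) : t ∈ cs.rightInvSeq ω := by
  classical
  contrapose! h
  rw [inversionParity_wordProd, List.count_eq_zero_of_not_mem h, Nat.cast_zero]

theorem isRightInversion_iff_inversionParity_ne_zero {w t : W} (ht : cs.IsReflection t) :
    cs.IsRightInversion w t ↔ inversionParity cs w t ≠ 0 := by
  have of_ne_zero {v : W} (hv : inversionParity cs v t ≠ 0) : cs.IsRightInversion v t := by
    obtain ⟨ω, hω, rfl⟩ := cs.exists_isReduced v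
    exact cs.isRightInversion_of_mem_rightInvSeq hω (mem_rightInvSeq_of_inversionParity_ne_zero hv)
  refine ⟨fun h hzero ↦ ?_, of_ne_zero⟩
  have mul_ne_zero : inversionParity cs (w * t) t ≠ 0 := by
    rw [inversionParity_mul, mul_inv_cancel_right, hzero, inversionParity_self ht, zero_add]
    exact one_ne_zero
  exact ht.isRightInversion_mul_left_iff.mp (of_ne_zero mul_ne_zero) h

theorem strong_exchange {ω : List B} {t : W}
    (h : cs.IsRightInversion (π ω) t) :
    ∃ k < ω.length, π ω * t = π (ω.eraseIdx k) := by
  have ht : t ∈ cs.rightInvSeq ω := mem_rightInvSeq_of_inversionParity_ne_zero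
    ((isRightInversion_iff_inversionParity_ne_zero h.1).mp h)
  obtain ⟨k, hk, rfl⟩ := List.mem_iff_getElem.mp ht
  refine ⟨k, by simpa using hk, ?_⟩
  rw [← wordProd_mul_getD_rightInvSeq, List.getD_eq_getElem _ _ hk]

theorem isRightInversion_mul_simple {w t : W} {i : B} (h : cs.IsRightInversion w t)
    (hne : t ≠ s i) : cs.IsRightInversion (w * s i) (s i * t * s i) := by
  have conj_ne : s i * t * s i ≠ s i := by
    simpa [mul_assoc, mul_eq_one_iff_eq_inv] using hne
  have conj_conj : s i * (s i * t * s i) * (s i)⁻¹ = t := by simp [mul_assoc]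
  have ht : cs.IsReflection (s i * t * s i) := by simpa using h.1.conj (s i)
  rw [isRightInversion_iff_inversionParity_ne_zero ht, inversionParity_mul, conj_conj,
    inversionParity_simple, if_neg conj_ne, add_zero]
  exact (isRightInversion_iff_inversionParity_ne_zero h.1).mp h

variable (cs) in
theorem exists_sublist_isReduced_wordProd_eq (ω : List B) :
    ∃ ω' : List B, ω'.Sublist ω ∧ cs.IsReduced ω' ∧ π ω' = π ω := by
  induction ω using List.reverseRecOn with
  | nil => exact ⟨[], .refl _, by simp [CoxeterSystem.IsReduced], rfl⟩
  | append_singleton ω i ih =>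
    obtain ⟨α, hsub, hα, hprod⟩ := ih
    rw [wordProd_append, wordProd_singleton, ← hprod]
    by_cases hi : cs.IsRightDescent (π α) i
    · obtain ⟨k, hk, heq⟩ :=
        strong_exchange ((cs.isRightInversion_simple_iff_isRightDescent _ i).mpr hi)
      refine ⟨α.eraseIdx k, ((List.eraseIdx_sublist α k).trans hsub).trans
        (List.sublist_append_left ω [i]), ?_, heq.symm⟩
      have hlen := cs.isRightDescent_iff.mp hi
      rw [hα.eq, heq, ← List.length_eraseIdx_add_one hk] at hlen
      exact Nat.add_right_cancel hlen
    · refine ⟨α ++ [i], hsub.append (.refl _), ?_, by rw [wordProd_append, wordProd_singleton]⟩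
      rw [CoxeterSystem.IsReduced, wordProd_append, wordProd_singleton,
        cs.not_isRightDescent_iff.mp hi, hα.eq, List.length_append, List.length_singleton]

/-! ### Right multiplication by simple reflections -/

variable (cs) in
/-- The edge relation of the Bruhat graph, whose reflexive transitive closure is the Bruhat
order. -/
def BruhatStep (u v : W) : Prop :=
  ∃ t, cs.IsRightInversion v t ∧ u = v * t

open Classical in
variable (cs) in
/-- The Demazure product of `w` with a simple reflection, that is, the longer one of `w` and
`w * cs.simple i`. -/
noncomputable def demazureMulSimple (w : W) (i : B) : W :=
  if cs.IsRightDescent w i then w else w * s i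

theorem bruhatStep_mul_simple {w : W} {i : B} (h : cs.IsRightDescent w i) :
    BruhatStep cs (w * s i) w :=
  ⟨s i, (cs.isRightInversion_simple_iff_isRightDescent w i).mpr h, rfl⟩

theorem bruhatStep_mul_simple_of_not {w : W} {i : B} (h : ¬cs.IsRightDescent w i) :
    BruhatStep cs w (w * s i) := by
  simpa using bruhatStep_mul_simple (cs.isRightDescent_iff_not_isRightDescent_mul.not_left.mp h)

variable (cs) in
theorem reflTransGen_self_demazureMulSimple (w : W) (i : B) :
    ReflTransGen (BruhatStep cs) w (demazureMulSimple cs w i) := by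
  rw [demazureMulSimple]
  split_ifs with h
  · exact .refl
  · exact .single (bruhatStep_mul_simple_of_not h)

variable (cs) in
theorem reflTransGen_mul_simple_demazureMulSimple (w : W) (i : B) :
    ReflTransGen (BruhatStep cs) (w * s i) (demazureMulSimple cs w i) := by
  rw [demazureMulSimple]
  split_ifs with h
  · exact .single (bruhatStep_mul_simple h)
  · exact .refl

theorem BruhatStep.mul_simple {u v : W} {i : B} (h : BruhatStep cs u v) (hne : u ≠ v * s i) :
    BruhatStep cs (u * s i) (v * s i) := by
  obtain ⟨t, ht, rfl⟩ := h
  exact ⟨_, isRightInversion_mul_simple ht (mt (congrArg (v * ·)) hne), by simp [mul_assoc]⟩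

theorem reflTransGen_demazureMulSimple_of_bruhatStep {u v : W} (h : BruhatStep cs u v) (i : B) :
    ReflTransGen (BruhatStep cs) (demazureMulSimple cs u i) (demazureMulSimple cs v i) := by
  by_cases hu : cs.IsRightDescent u i
  · rw [demazureMulSimple, if_pos hu]
    exact .head h (reflTransGen_self_demazureMulSimple cs v i)
  · rw [demazureMulSimple, if_neg hu]
    by_cases huv : u = v * s i
    · rw [huv, simple_mul_simple_cancel_right]
      exact reflTransGen_self_demazureMulSimple cs v i
    · exact .head (h.mul_simple huv) (reflTransGen_mul_simple_demazureMulSimple cs v i)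

theorem reflTransGen_demazureMulSimple_mono {u v : W} (h : ReflTransGen (BruhatStep cs) u v)
    (i : B) :
    ReflTransGen (BruhatStep cs) (demazureMulSimple cs u i) (demazureMulSimple cs v i) :=
  h.lift' (demazureMulSimple cs · i) fun _ _ hstep ↦
    reflTransGen_demazureMulSimple_of_bruhatStep hstep i

variable (cs) in
/-- The iterated Demazure product of `x` with the letters of the word `ω`, which need not be
reduced. -/
noncomputable def demazureMulWord (x : W) (ω : List B) : W :=
  ω.foldl (demazureMulSimple cs) x

theorem reflTransGen_mul_wordProd_demazureMulWord {x x' : W} {ω ω' : List B}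
    (hx : ReflTransGen (BruhatStep cs) x' x) (h : ω'.Sublist ω) :
    ReflTransGen (BruhatStep cs) (x' * π ω') (demazureMulWord cs x ω) := by
  induction h generalizing x x' with
  | slnil => simpa [demazureMulWord] using hx
  | cons i _ ih => exact ih (hx.trans (reflTransGen_self_demazureMulSimple cs x i))
  | cons_cons i _ ih =>
    rw [wordProd_cons, ← mul_assoc]
    exact ih ((reflTransGen_mul_simple_demazureMulSimple cs x' i).trans
      (reflTransGen_demazureMulSimple_mono hx i))

variable (cs) in
theorem exists_sublist_demazureMulWord_eq (x : W) (ω : List B) :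
    ∃ ω' : List B, ω'.Sublist ω ∧ demazureMulWord cs x ω = x * π ω' := by
  induction ω generalizing x with
  | nil => exact ⟨[], .refl _, by simp [demazureMulWord]⟩
  | cons i ω ih =>
    obtain ⟨ω', hsub, heq⟩ := ih (demazureMulSimple cs x i)
    rw [demazureMulWord, List.foldl_cons, ← demazureMulWord, heq, demazureMulSimple]
    split_ifs
    · exact ⟨ω', hsub.cons i, rfl⟩
    · exact ⟨i :: ω', hsub.cons_cons i, by rw [wordProd_cons, mul_assoc]⟩

theorem demazureMulWord_one {ω : List B} (hω : cs.IsReduced ω) :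
    demazureMulWord cs 1 ω = π ω := by
  induction ω using List.reverseRecOn with
  | nil => simp [demazureMulWord]
  | append_singleton ω i ih =>
    have hred : cs.IsReduced ω := by simpa using hω.take ω.length
    have hdesc : ¬cs.IsRightDescent (π ω) i := by
      rw [cs.not_isRightDescent_iff, ← wordProd_singleton, ← wordProd_append, hω.eq, hred.eq,
        List.length_append, List.length_singleton]
    rw [demazureMulWord, List.foldl_concat, ← demazureMulWord, ih hred, demazureMulSimple,
      if_neg hdesc, wordProd_append, wordProd_singleton]

/-! ### The Bruhat order -/

theorem bruhatLE_refl (u : W) : cs.BruhatLE u u := by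
  obtain ⟨ω, hω, hu⟩ := cs.exists_isReduced u
  exact ⟨ω, ω, hω, hu, .refl ω, hω, hu⟩

theorem length_le_of_bruhatLE {u v : W} (h : cs.BruhatLE u v) : ℓ u ≤ ℓ v := by
  obtain ⟨ω, ω', hω', rfl, hsub, hω, rfl⟩ := h
  rw [hω.eq, hω'.eq]
  exact hsub.length_le

theorem bruhatLE_antisymm {u v : W} (h : cs.BruhatLE u v) (h' : cs.BruhatLE v u) : u = v := by
  have hlen : ℓ v ≤ ℓ u := length_le_of_bruhatLE h'
  obtain ⟨ω, ω', hω', rfl, hsub, hω, rfl⟩ := h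
  rw [hω.eq, hω'.eq] at hlen
  rw [hsub.eq_of_length_le hlen]

theorem bruhatLE_inv {u v : W} (h : cs.BruhatLE u v) : cs.BruhatLE u⁻¹ v⁻¹ := by
  obtain ⟨ω, ω', hω', rfl, hsub, hω, rfl⟩ := h
  exact ⟨ω.reverse, ω'.reverse, hω'.reverse, by simp, hsub.reverse, hω.reverse, by simp⟩

theorem reflTransGen_of_sublist {ω ω' : List B} (hω' : cs.IsReduced ω') (h : ω.Sublist ω') :
    ReflTransGen (BruhatStep cs) (π ω) (π ω') := by
  simpa [demazureMulWord_one hω'] using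
    reflTransGen_mul_wordProd_demazureMulWord (cs := cs) (x' := 1) .refl h

theorem exists_sublist_of_reflTransGen {u : W} {ω : List B}
    (h : ReflTransGen (BruhatStep cs) u (π ω)) :
    ∃ ω' : List B, ω'.Sublist ω ∧ π ω' = u := by
  induction h using ReflTransGen.head_induction_on with
  | refl => exact ⟨ω, .refl ω, rfl⟩
  | head hstep _ ih =>
    obtain ⟨α, hsub, rfl⟩ := ih
    obtain ⟨t, ht, rfl⟩ := hstep
    obtain ⟨k, -, heq⟩ := strong_exchange ht
    exact ⟨α.eraseIdx k, (List.eraseIdx_sublist α k).trans hsub, heq.symm⟩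

theorem bruhatLE_iff_reflTransGen {u v : W} :
    cs.BruhatLE u v ↔ ReflTransGen (BruhatStep cs) u v := by
  constructor
  · rintro ⟨ω, ω', hω', rfl, hsub, -, rfl⟩
    exact reflTransGen_of_sublist hω' hsub
  · intro h
    obtain ⟨ω, hω, rfl⟩ := cs.exists_isReduced v
    obtain ⟨α, hα, rfl⟩ := exists_sublist_of_reflTransGen h
    obtain ⟨ω', hsub, hω', heq⟩ := exists_sublist_isReduced_wordProd_eq cs α
    exact ⟨ω', ω, hω, rfl, hsub.trans hα, hω', heq.symm⟩

/-! ### The Demazure product -/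

variable (cs)

/-- The Demazure product of `x` and `y`, computed from a chosen reduced word for `y`. -/
noncomputable def demazureProduct (x y : W) : W :=
  demazureMulWord cs x (cs.exists_isReduced y).choose

theorem exists_isReduced_demazureProduct_eq (x y : W) :
    ∃ ω : List B, cs.IsReduced ω ∧ y = π ω ∧ demazureProduct cs x y = demazureMulWord cs x ω :=
  ⟨_, (cs.exists_isReduced y).choose_spec.1, (cs.exists_isReduced y).choose_spec.2, rfl⟩

variable {cs} in
theorem mul_bruhatLE_demazureProduct {x x' y y' : W} (hx : cs.BruhatLE x' x)
    (hy : cs.BruhatLE y' y) : cs.BruhatLE (x' * y') (demazureProduct cs x y) := by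
  obtain ⟨ω, -, rfl, heq⟩ := exists_isReduced_demazureProduct_eq cs x y
  rw [bruhatLE_iff_reflTransGen] at hx hy
  obtain ⟨ω', hsub, rfl⟩ := exists_sublist_of_reflTransGen hy
  rw [heq, bruhatLE_iff_reflTransGen]
  exact reflTransGen_mul_wordProd_demazureMulWord hx hsub

theorem exists_demazureProduct_eq_mul_right (x y : W) :
    ∃ y', cs.BruhatLE y' y ∧ demazureProduct cs x y = x * y' := by
  obtain ⟨ω, hω, rfl, heq⟩ := exists_isReduced_demazureProduct_eq cs x y
  obtain ⟨ω', hsub, hprod⟩ := exists_sublist_demazureMulWord_eq cs x ω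
  exact ⟨π ω', bruhatLE_iff_reflTransGen.mpr (reflTransGen_of_sublist hω hsub), heq.trans hprod⟩

theorem demazureProduct_inv_bruhatLE (x y : W) :
    cs.BruhatLE (demazureProduct cs x y)⁻¹ (demazureProduct cs y⁻¹ x⁻¹) := by
  obtain ⟨y', hy', heq⟩ := exists_demazureProduct_eq_mul_right cs x y
  rw [heq, mul_inv_rev]
  exact mul_bruhatLE_demazureProduct (bruhatLE_inv hy') (bruhatLE_refl x⁻¹)

theorem demazureProduct_inv (x y : W) :
    (demazureProduct cs x y)⁻¹ = demazureProduct cs y⁻¹ x⁻¹ := by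
  refine bruhatLE_antisymm (demazureProduct_inv_bruhatLE cs x y) ?_
  simpa using bruhatLE_inv (demazureProduct_inv_bruhatLE cs y⁻¹ x⁻¹)

theorem exists_demazureProduct_eq_mul_left (x y : W) :
    ∃ x', cs.BruhatLE x' x ∧ demazureProduct cs x y = x' * y := by
  obtain ⟨z, hz, heq⟩ := exists_demazureProduct_eq_mul_right cs y⁻¹ x⁻¹
  refine ⟨z⁻¹, by simpa using bruhatLE_inv hz, ?_⟩
  rw [← inv_inj, demazureProduct_inv, heq, mul_inv_rev, inv_inv]

end BruhatOrder

/-- For any `x, y` in a Coxeter group, the set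
`{x'·y' : x' ≤ x, y' ≤ y}` contains a unique maximal element with respect to the Bruhat
order, and this element is the unique maximal element of `{x·y' : y' ≤ y}` and of
`{x'·y : x' ≤ x}` as well (the Demazure product of `x` and `y`). -/
theorem demazure_product_exists_unique {B W : Type*} [Group W] {M : CoxeterMatrix B}
    (cs : CoxeterSystem M W) (x y : W) :
    ∃ m : W,
      -- `m` is the greatest element of `{x'·y' : x' ≤ x, y' ≤ y}` ...
      ((∃ x' y' : W, cs.BruhatLE x' x ∧ cs.BruhatLE y' y ∧ m = x' * y') ∧
        (∀ z : W, (∃ x' y' : W, cs.BruhatLE x' x ∧ cs.BruhatLE y' y ∧ z = x' * y') →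
          cs.BruhatLE z m) ∧
        -- ... and the unique maximal element of that set ...
        (∀ z : W, (∃ x' y' : W, cs.BruhatLE x' x ∧ cs.BruhatLE y' y ∧ z = x' * y') →
          (∀ z' : W, (∃ x' y' : W, cs.BruhatLE x' x ∧ cs.BruhatLE y' y ∧ z' = x' * y') →
            cs.BruhatLE z z' → z = z') → z = m)) ∧
      -- `m` is the greatest and unique maximal element of `{x·y' : y' ≤ y}` ...
      ((∃ y' : W, cs.BruhatLE y' y ∧ m = x * y') ∧
        (∀ z : W, (∃ y' : W, cs.BruhatLE y' y ∧ z = x * y') → cs.BruhatLE z m) ∧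
        (∀ z : W, (∃ y' : W, cs.BruhatLE y' y ∧ z = x * y') →
          (∀ z' : W, (∃ y' : W, cs.BruhatLE y' y ∧ z' = x * y') →
            cs.BruhatLE z z' → z = z') → z = m)) ∧
      -- ... and of `{x'·y : x' ≤ x}`.
      ((∃ x' : W, cs.BruhatLE x' x ∧ m = x' * y) ∧
        (∀ z : W, (∃ x' : W, cs.BruhatLE x' x ∧ z = x' * y) → cs.BruhatLE z m) ∧
        (∀ z : W, (∃ x' : W, cs.BruhatLE x' x ∧ z = x' * y) →
          (∀ z' : W, (∃ x' : W, cs.BruhatLE x' x ∧ z' = x' * y) →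
            cs.BruhatLE z z' → z = z') → z = m)) := by
  have ⟨y₀, hy₀, hright⟩ := BruhatOrder.exists_demazureProduct_eq_mul_right cs x y
  have ⟨x₀, hx₀, hleft⟩ := BruhatOrder.exists_demazureProduct_eq_mul_left cs x y
  have hx : cs.BruhatLE x x := BruhatOrder.bruhatLE_refl x
  have hy : cs.BruhatLE y y := BruhatOrder.bruhatLE_refl y
  have greatest_and_unique (P : W → Prop) {m : W} (hm : P m) (hP : ∀ z, P z → cs.BruhatLE z m) :
      P m ∧ (∀ z, P z → cs.BruhatLE z m) ∧
        ∀ z, P z → (∀ z', P z' → cs.BruhatLE z z' → z = z') → z = m :=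
    ⟨hm, hP, fun z hz hmax ↦ hmax m hm (hP z hz)⟩
  refine ⟨BruhatOrder.demazureProduct cs x y,
    greatest_and_unique (∃ x' y', cs.BruhatLE x' x ∧ cs.BruhatLE y' y ∧ · = x' * y')
      ⟨x, y₀, hx, hy₀, hright⟩ ?_,
    greatest_and_unique (∃ y', cs.BruhatLE y' y ∧ · = x * y') ⟨y₀, hy₀, hright⟩ ?_,
    greatest_and_unique (∃ x', cs.BruhatLE x' x ∧ · = x' * y) ⟨x₀, hx₀, hleft⟩ ?_⟩
  · rintro _ ⟨x', y', hx', hy', rfl⟩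
    exact BruhatOrder.mul_bruhatLE_demazureProduct hx' hy'
  · rintro _ ⟨y', hy', rfl⟩
    exact BruhatOrder.mul_bruhatLE_demazureProduct hx hy'
  · rintro _ ⟨x', hx', rfl⟩
    exact BruhatOrder.mul_bruhatLE_demazureProduct hx' hy
end

section
/- In the Weyl group W of type A_n (the symmetric group on n+1 letters, with simple reflections s_1, …, s_n labeled as in Bourbaki), for every 1 ≤ i ≤ n one has w_{i,0}·w_0 = (s_1 s_2 ⋯ s_n)^i. -/
noncomputable section
open CoxeterMatrix

/-- The Weyl group of type `Aₙ`, given by its Coxeter presentation. -/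
abbrev WA (n : ℕ) := (Aₙ n).Group

/-- The canonical Coxeter system of type `Aₙ`. -/
def csA (n : ℕ) : CoxeterSystem (Aₙ n) (WA n) := (Aₙ n).toCoxeterSystem

/-- `segA n a b` is the product `s_a s_{a+1} ⋯ s_b` of the simple reflections with
Bourbaki labels `a, a+1, …, b` (so `s_j`, `1 ≤ j ≤ n`, is `(csA n).simple ⟨j-1, _⟩`). -/
def segA (n a b : ℕ) : WA n :=
  (((List.finRange n).filter fun k : Fin n => a ≤ (k : ℕ) + 1 ∧ (k : ℕ) + 1 ≤ b).map
    (csA n).simple).prod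

/-- The standard parabolic subgroup of the type-`Aₙ` Weyl group generated by all simple
reflections except the one with (zero-based) index `i`. -/
def paraA (n : ℕ) (i : Fin n) : Subgroup (WA n) :=
  Subgroup.closure ((csA n).simple '' {j : Fin n | j ≠ i})

/-!
The simple reflections act on `Fin (n + 1)` as adjacent transpositions. This representation is
faithful and reads off right descents: `s_j` is a right descent of `w` exactly when the permutation
of `w` descends at `j`. The longest element descends everywhere, so it reverses `{0, …, n}`, and the
longest element of the parabolic subgroup descends everywhere except at `i`, where it must respect
the blocks `{0, …, i}` and `{i + 1, …, n}`, so it reverses each of them. Modulo `n + 1` these two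
permutations are the reflections `x ↦ n - x` and `x ↦ i - x`, and the Coxeter element is the
rotation `x ↦ x + 1`. The theorem becomes the dihedral identity `i - (n - x) = x + (i + 1)`.
-/

section CoxeterSystem

open CoxeterSystem

variable {B W : Type*} [Group W] {M : CoxeterMatrix B} (cs : CoxeterSystem M W)

theorem isRightDescent_mul_wordProd_braidWord {u : W} {j k : B} (hM : M j k ≠ 0)
    (hlen : cs.length (u * cs.wordProd (braidWord M j k)) = cs.length u + M j k) :
    cs.IsRightDescent (u * cs.wordProd (braidWord M j k)) j := by
  obtain ⟨m, hm⟩ := Nat.exists_eq_succ_of_ne_zero hM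
  have hmul : u * cs.wordProd (braidWord M j k) * cs.simple j =
      u * cs.wordProd (alternatingWord j k m) := by
    rw [cs.wordProd_braidWord_eq, braidWord, M.symmetric k j, hm, alternatingWord_succ,
      cs.wordProd_concat, ← mul_assoc, cs.simple_mul_simple_cancel_right]
  rw [IsRightDescent, hmul, hlen, hm]
  calc cs.length (u * cs.wordProd (alternatingWord j k m))
      ≤ cs.length u + cs.length (cs.wordProd (alternatingWord j k m)) := cs.length_mul_le _ _
    _ ≤ cs.length u + m := by
      simpa only [length_alternatingWord, add_le_add_iff_left] using
        cs.length_wordProd_le (alternatingWord j k m)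
    _ < cs.length u + (m + 1) := Nat.lt_succ_self _

/-- `u` is the shortest element of the coset `w⟨s_j, s_k⟩`. An alternating suffix of length `M j k`
could be braided to end in `s_j`; `M j k = 0` encodes infinite order, where no such bound exists. -/
theorem exists_eq_mul_alternatingWord_of_not_isRightDescent {w : W} {j : B} (k : B)
    (hj : ¬ cs.IsRightDescent w j) :
    ∃ (u : W) (m : ℕ), w = u * cs.wordProd (alternatingWord j k m) ∧
      cs.length w = cs.length u + m ∧ ¬ cs.IsRightDescent u j ∧ ¬ cs.IsRightDescent u k ∧
      (M j k ≠ 0 → m < M j k) := by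
  induction hl : cs.length w generalizing w j k with
  | zero =>
    obtain rfl := cs.length_eq_zero_iff.mp hl
    exact ⟨1, 0, by simp [alternatingWord], by simp, hj, cs.not_isRightDescent_one k,
      Nat.pos_of_ne_zero⟩
  | succ l ih =>
    by_cases hk : cs.IsRightDescent w k
    · have hlen := cs.isRightDescent_iff.mp hk
      obtain ⟨u, m, hu, hlenu, huk, huj, hm⟩ :=
        ih j (cs.isRightDescent_iff_not_isRightDescent_mul.mp hk) (by omega)
      have hw : w = u * cs.wordProd (alternatingWord j k (m + 1)) := by
        rw [alternatingWord_succ, cs.wordProd_concat, ← mul_assoc, ← hu,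
          cs.simple_mul_simple_cancel_right]
      have hne : m + 1 ≠ M j k := by
        intro hmM
        rw [hmM] at hw
        exact hj (hw ▸ isRightDescent_mul_wordProd_braidWord cs (by omega) (hw ▸ by omega))
      rw [M.symmetric k j] at hm
      exact ⟨u, m + 1, hw, by omega, huj, huk, fun hM => lt_of_le_of_ne (hm hM) hne⟩
    · exact ⟨w, 0, by simp [alternatingWord], hl.symm, hj, hk, Nat.pos_of_ne_zero⟩

end CoxeterSystem

section AdjacentSwap

variable {n : ℕ}

theorem lt_apply_swap_of_ne {α : Type*} [Preorder α] {f : Fin (n + 1) → α} {j k : Fin n}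
    (hne : j ≠ k) (hj : f j.castSucc < f j.succ) (hk : f k.castSucc < f k.succ) :
    f (Equiv.swap k.castSucc k.succ j.castSucc) < f (Equiv.swap k.castSucc k.succ j.succ) := by
  rw [Equiv.swap_apply_def, Equiv.swap_apply_def]
  grind

theorem swap_mul_swap_apply_castSucc {j k : Fin n}
    (hadj : k.succ = j.castSucc ∨ j.succ = k.castSucc) :
    (Equiv.swap j.castSucc j.succ * Equiv.swap k.castSucc k.succ) j.castSucc = k.castSucc := by
  rw [Equiv.Perm.mul_apply, Equiv.swap_apply_def, Equiv.swap_apply_def]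
  grind

theorem swap_mul_swap_apply_succ {j k : Fin n}
    (hadj : k.succ = j.castSucc ∨ j.succ = k.castSucc) :
    (Equiv.swap j.castSucc j.succ * Equiv.swap k.castSucc k.succ) j.succ = k.succ := by
  rw [Equiv.Perm.mul_apply, Equiv.swap_apply_def, Equiv.swap_apply_def]
  grind

theorem isThreeCycle_swap_mul_swap {j k : Fin n}
    (hadj : k.succ = j.castSucc ∨ j.succ = k.castSucc) :
    (Equiv.swap j.castSucc j.succ * Equiv.swap k.castSucc k.succ).IsThreeCycle := by
  rcases hadj with h | h
  · rw [← h, Equiv.swap_comm k.castSucc]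
    exact Equiv.Perm.isThreeCycle_swap_mul_swap_same (by grind) (by grind) (by grind)
  · rw [← h, Equiv.swap_comm j.castSucc]
    exact Equiv.Perm.isThreeCycle_swap_mul_swap_same (by grind) (by grind) (by grind)

theorem cycleRange_succ_eq_mul_swap (j : Fin n) :
    j.succ.cycleRange = j.castSucc.cycleRange * Equiv.swap j.castSucc j.succ := by
  ext1 x
  rw [Equiv.Perm.mul_apply, Equiv.swap_apply_def, Fin.cycleRange_apply]
  split_ifs <;> grind [Fin.cycleRange_apply, Fin.coeSucc_eq_succ]

theorem prod_swap_castSucc_succ_eq_finRotate (n : ℕ) :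
    ((List.finRange n).map fun j => Equiv.swap j.castSucc j.succ).prod = finRotate (n + 1) := by
  have hpartial (a : Fin (n + 1)) :
      Fin.partialProd (fun j : Fin n => Equiv.swap j.castSucc j.succ) a = a.cycleRange := by
    induction a using Fin.induction with
    | zero => rw [Fin.partialProd_zero, Fin.cycleRange_zero]
    | succ j ih => rw [Fin.partialProd_succ, ih, cycleRange_succ_eq_mul_swap]
  rw [← Fin.cycleRange_last, ← hpartial, Fin.partialProd, List.ofFn_eq_map,
    List.take_of_length_le (by simp)]

end AdjacentSwap

section Dihedral

variable {n : ℕ}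

theorem finRotate_pow_val (a : Fin n) : finRotate n ^ (a : ℕ) = finCycle a :=
  DFunLike.coe_injective (by rw [finCycle_eq_finRotate_iterate, Equiv.Perm.coe_pow])

theorem subLeft_castSucc_mul_subLeft_last (i : Fin n) :
    (Equiv.subLeft i.castSucc * Equiv.subLeft (Fin.last n) : Equiv.Perm (Fin (n + 1))) =
      finCycle i.succ := by
  ext1 x
  have hlast : Fin.last n = -1 := by rw [← Fin.neg_last, neg_neg]
  simp only [Equiv.Perm.mul_apply, Equiv.subLeft_apply, finCycle_apply, ← Fin.coeSucc_eq_succ,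
    hlast]
  abel

theorem eq_subLeft_of_le_iff_of_succ_lt {σ : Equiv.Perm (Fin (n + 1))} {a : Fin (n + 1)}
    (hblock : ∀ x, σ x ≤ a ↔ x ≤ a)
    (hdesc : ∀ j : Fin n, j.castSucc ≠ a → σ j.succ < σ j.castSucc) :
    σ = Equiv.subLeft a := by
  have hmono : StrictMono fun x => σ (a - x) := by
    rw [Fin.strictMono_iff_lt_succ]
    intro j
    rcases eq_or_ne j.castSucc a with rfl | hj
    · have hzero : σ 0 ≤ j.castSucc := (hblock 0).mpr (Fin.zero_le _)
      have hlast : j.castSucc < σ (Fin.last n) :=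
        not_le.mp fun h => (Fin.castSucc_lt_last j).not_ge ((hblock _).mp h)
      have hsub : j.castSucc - j.succ = Fin.last n := by
        rw [← Fin.coeSucc_eq_succ, sub_add_cancel_left, ← Fin.neg_last, neg_neg]
      simpa only [sub_self, hsub] using hzero.trans_lt hlast
    · obtain ⟨k, hk⟩ := Fin.exists_succ_eq.mpr (sub_ne_zero.mpr hj.symm)
      have hsub : a - j.succ = k.castSucc := by
        rw [← Fin.coeSucc_eq_succ, ← sub_sub, ← hk, ← Fin.coeSucc_eq_succ, add_sub_cancel_right]
      have hka : k.castSucc ≠ a := by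
        rw [← hsub, Ne, sub_eq_self]
        exact Fin.succ_ne_zero j
      simpa only [← hk, hsub] using hdesc k hka
  ext1 x
  simpa only [sub_sub_cancel, id_eq, Equiv.subLeft_apply] using congrFun hmono.eq_id (a - x)

end Dihedral

section PermutationRepresentation

variable {n : ℕ}

theorem coxeterMatrixA_apply (j k : Fin n) :
    CoxeterMatrix.A n j k =
      if j = k then 1 else if k.succ = j.castSucc ∨ j.succ = k.castSucc then 3 else 2 := by
  simp only [Fin.ext_iff (n := n + 1)]
  rfl

theorem isLiftable_swap_castSucc_succ (n : ℕ) :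
    (CoxeterMatrix.A n).IsLiftable fun j : Fin n => Equiv.swap j.castSucc j.succ := by
  intro j k
  rw [coxeterMatrixA_apply]
  split_ifs with heq hadj
  · rw [heq, pow_one, Equiv.swap_mul_self]
  · rw [← (isThreeCycle_swap_mul_swap hadj).orderOf, pow_orderOf_eq_one]
  · have hcomm : Commute (Equiv.swap j.castSucc j.succ) (Equiv.swap k.castSucc k.succ) :=
      (Equiv.Perm.disjoint_swap_swap (by grind)).commute
    rw [hcomm.mul_pow, pow_two, pow_two, Equiv.swap_mul_self, Equiv.swap_mul_self, one_mul]

/-- The permutation representation of the Weyl group of type `Aₙ` on `n + 1` letters, numbered from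
`0`: the simple reflection with zero-based index `j` acts as the transposition of `j` and `j + 1`.
Being faithful, it turns identities in the Weyl group into identities of permutations. -/
def permRep (n : ℕ) : WA n →* Equiv.Perm (Fin (n + 1)) :=
  (csA n).lift ⟨_, isLiftable_swap_castSucc_succ n⟩

theorem permRep_simple (j : Fin n) :
    permRep n ((csA n).simple j) = Equiv.swap j.castSucc j.succ :=
  (csA n).lift_apply_simple (isLiftable_swap_castSucc_succ n) j

theorem permRep_castSucc_lt_succ_of_not_isRightDescent {w : WA n} {j : Fin n}
    (hj : ¬ (csA n).IsRightDescent w j) : permRep n w j.castSucc < permRep n w j.succ := by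
  induction hl : (csA n).length w using Nat.strong_induction_on generalizing w j with
  | _ l ih =>
  rcases eq_or_ne w 1 with rfl | hw
  · simp
  obtain ⟨k, hk⟩ := (csA n).exists_rightDescent_of_ne_one hw
  have hne : j ≠ k := by
    rintro rfl
    exact hj hk
  obtain ⟨u, m, rfl, hlen, huj, huk, hm⟩ :=
    exists_eq_mul_alternatingWord_of_not_isRightDescent (csA n) k hj
  have hm0 : m ≠ 0 := by
    rintro rfl
    exact huk (by simpa [CoxeterSystem.alternatingWord] using hk)
  have hascj := ih _ (by omega) huj rfl
  have hasck := ih _ (by omega) huk rfl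
  have hcases : m = 1 ∨ m = 2 ∧ (k.succ = j.castSucc ∨ j.succ = k.castSucc) := by
    have hbound : CoxeterMatrix.A n j k ≠ 0 → m < CoxeterMatrix.A n j k := hm
    rw [coxeterMatrixA_apply] at hbound
    grind
  rcases hcases with rfl | ⟨rfl, hadj⟩
  · simpa [CoxeterSystem.alternatingWord, permRep_simple] using lt_apply_swap_of_ne hne hascj hasck
  · have hperm : permRep n ((csA n).wordProd (CoxeterSystem.alternatingWord j k 2)) =
        Equiv.swap j.castSucc j.succ * Equiv.swap k.castSucc k.succ := by
      simp [CoxeterSystem.alternatingWord, CoxeterSystem.wordProd_cons, permRep_simple]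
    rwa [map_mul, Equiv.Perm.mul_apply, Equiv.Perm.mul_apply, hperm,
      swap_mul_swap_apply_castSucc hadj, swap_mul_swap_apply_succ hadj]

theorem permRep_succ_lt_castSucc_of_isRightDescent {w : WA n} {j : Fin n}
    (hj : (csA n).IsRightDescent w j) : permRep n w j.succ < permRep n w j.castSucc := by
  simpa [permRep_simple] using permRep_castSucc_lt_succ_of_not_isRightDescent
    ((csA n).isRightDescent_iff_not_isRightDescent_mul.mp hj)

theorem permRep_injective (n : ℕ) : Function.Injective (permRep n) := by
  rw [injective_iff_map_eq_one]
  intro w hw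
  by_contra hne
  obtain ⟨k, hk⟩ := (csA n).exists_rightDescent_of_ne_one hne
  have hdesc := permRep_succ_lt_castSucc_of_isRightDescent hk
  rw [hw] at hdesc
  exact hdesc.not_gt k.castSucc_lt_succ

theorem permRep_le_castSucc_iff_of_mem_paraA {i : Fin n} {w : WA n} (hw : w ∈ paraA n i)
    (x : Fin (n + 1)) : permRep n w x ≤ i.castSucc ↔ x ≤ i.castSucc := by
  induction hw using Subgroup.closure_induction generalizing x with
  | mem w hw =>
    obtain ⟨j, hj, rfl⟩ := hw
    rw [permRep_simple, Equiv.swap_apply_def]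
    grind
  | one => simp
  | mul u v _ _ hu hv => rw [map_mul, Equiv.Perm.mul_apply, hu, hv]
  | inv u _ hu =>
    rw [← hu, map_inv, ← Equiv.Perm.mul_apply, mul_inv_cancel, Equiv.Perm.one_apply]

theorem permRep_eq_subLeft_castSucc {i : Fin n} {w : WA n} (hw : w ∈ paraA n i)
    (hdesc : ∀ j ≠ i, (csA n).IsRightDescent w j) : permRep n w = Equiv.subLeft i.castSucc :=
  eq_subLeft_of_le_iff_of_succ_lt (permRep_le_castSucc_iff_of_mem_paraA hw) fun j hj =>
    permRep_succ_lt_castSucc_of_isRightDescent (hdesc j (ne_of_apply_ne Fin.castSucc hj))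

theorem permRep_eq_subLeft_last {w : WA n} (hdesc : ∀ j, (csA n).IsRightDescent w j) :
    permRep n w = Equiv.subLeft (Fin.last n) :=
  eq_subLeft_of_le_iff_of_succ_lt (fun x => by simp only [Fin.le_last]) fun j _ =>
    permRep_succ_lt_castSucc_of_isRightDescent (hdesc j)

theorem permRep_segA (n : ℕ) : permRep n (segA n 1 n) = finRotate (n + 1) := by
  have hfilter : ((List.finRange n).filter fun k : Fin n =>
      1 ≤ (k : ℕ) + 1 ∧ (k : ℕ) + 1 ≤ n) = List.finRange n :=
    List.filter_eq_self.mpr fun k _ => by simp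
  rw [segA, hfilter, map_list_prod, List.map_map, ← prod_swap_castSucc_succ_eq_finRotate]
  exact congrArg List.prod (List.map_congr_left fun j _ => permRep_simple j)

end PermutationRepresentation

/-- In the Weyl group of type `Aₙ` (Bourbaki labels), for every
`1 ≤ i ≤ n` (here `i : Fin n` denotes the Bourbaki label `i + 1`) one has
`w_{i,0}·w₀ = (s_1 s_2 ⋯ s_n)^i`, where `w₀` is the longest element and `w_{i,0}` is the
longest element of the standard parabolic subgroup generated by all simple reflections
except `s_i`. -/
theorem typeA_wi0_mul_w0_eq_coxeter_pow (n : ℕ) (i : Fin n)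
    (w₀ : WA n) (hw₀ : ∀ v : WA n, (csA n).length v ≤ (csA n).length w₀)
    (wᵢ : WA n) (hwᵢ : wᵢ ∈ paraA n i)
    (hwᵢmax : ∀ v ∈ paraA n i, (csA n).length v ≤ (csA n).length wᵢ) :
    wᵢ * w₀ = (segA n 1 n) ^ ((i : ℕ) + 1) := by
  have hdesc₀ (j : Fin n) : (csA n).IsRightDescent w₀ j :=
    (hw₀ _).lt_of_ne ((csA n).length_mul_simple_ne w₀ j)
  have hdescᵢ (j : Fin n) (hj : j ≠ i) : (csA n).IsRightDescent wᵢ j :=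
    (hwᵢmax _ (mul_mem hwᵢ (Subgroup.subset_closure ⟨j, hj, rfl⟩))).lt_of_ne
      ((csA n).length_mul_simple_ne wᵢ j)
  apply permRep_injective n
  rw [map_mul, permRep_eq_subLeft_castSucc hwᵢ hdescᵢ, permRep_eq_subLeft_last hdesc₀,
    subLeft_castSucc_mul_subLeft_last, ← finRotate_pow_val, Fin.val_succ, map_pow, permRep_segA]
end
end

section
/- Let W be the Weyl group of type B_n (n ≥ 2) with simple reflections s_1, …, s_n labeled as in Bourbaki. Then w_{1,0}·w_0 = (s_1 s_2 ⋯ s_{n−1})·s_n·(s_1 s_2 ⋯ s_{n−1})⁻¹, and the set of elements of minimal length in the conjugacy class of w_{1,0}·w_0 is exactly {s_n}. -/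
noncomputable section
open CoxeterMatrix

/-- The Weyl group of type `Bₙ` (equivalently `Cₙ`), given by its Coxeter
presentation; the Coxeter matrices of types `Bₙ` and `Cₙ` coincide.  Bourbaki labels:
`s_j` (`1 ≤ j ≤ n`) is the simple reflection of index `j - 1`, and the bond of order `4`
joins `s_{n-1}` and `s_n`. -/
abbrev WB (n : ℕ) := (Bₙ n).Group

/-- The canonical Coxeter system of type `Bₙ`/`Cₙ`. -/
def csB (n : ℕ) : CoxeterSystem (Bₙ n) (WB n) := (Bₙ n).toCoxeterSystem

/-- `segB n a b` is the product `s_a s_{a+1} ⋯ s_b` (Bourbaki labels). -/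
def segB (n a b : ℕ) : WB n :=
  (((List.finRange n).filter fun k : Fin n => a ≤ (k : ℕ) + 1 ∧ (k : ℕ) + 1 ≤ b).map
    (csB n).simple).prod

/-- The standard parabolic subgroup of the type-`Bₙ`/`Cₙ` Weyl group generated by all
simple reflections except the one with (zero-based) index `i`. -/
def paraB (n : ℕ) (i : Fin n) : Subgroup (WB n) :=
  Subgroup.closure ((csB n).simple '' {j : Fin n | j ≠ i})

/-! The first `m` of the reversed simple reflections `r 0 = s_n, r 1 = s_{n-1}, …` generate a
parabolic subgroup `H m` of type `B_m`, and the palindrome `p m = r m ⋯ r 1 r 0 r 1 ⋯ r m` (the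
reflection in the coordinate `m`) centralizes `H m`. The double coset decomposition
`H (m + 1) = H m ∪ H m (r m) H m ∪ H m (p m)` shows that every element of `H (m + 1)` lies in
`H m` times an element that is either `p m` or of length at most `2 m`. Hence every element of `H m`
other than `p 0 ⋯ p (m - 1)` has length less than `m ^ 2`. That product negates the first `m`
coordinates in the action of `W` by signed permutations, and counting inversions gives it length at
least `m ^ 2`, so it is the longest element of `H m`. Therefore `w_{1,0} w_0 = p (n - 1)`, a
conjugate of `s_n`, and `s_n` is separated from the other simple reflections by the sign character
that is `-1` on `s_n` only. -/

section Involutions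

variable {G : Type*} [Group G] {a b : G}

lemma mul_pow_two_eq_one_iff_commute (ha : a * a = 1) (hb : b * b = 1) :
    (a * b) ^ 2 = 1 ↔ Commute a b := by
  rw [pow_two, mul_eq_one_iff_eq_inv, mul_inv_rev, inv_eq_of_mul_eq_one_left ha,
    inv_eq_of_mul_eq_one_left hb, commute_iff_eq]

lemma mul_pow_three_eq_one_iff_braid (ha : a * a = 1) (hb : b * b = 1) :
    (a * b) ^ 3 = 1 ↔ a * b * a = b * a * b := by
  have hsplit : (a * b) ^ 3 = a * b * a * (b * a * b) := by
    simp only [pow_succ, pow_zero, one_mul, mul_assoc]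
  rw [hsplit, mul_eq_one_iff_eq_inv]
  simp only [mul_inv_rev, inv_eq_of_mul_eq_one_left ha, inv_eq_of_mul_eq_one_left hb, mul_assoc]

lemma mul_pow_four_eq_one_iff_braid (ha : a * a = 1) (hb : b * b = 1) :
    (a * b) ^ 4 = 1 ↔ a * b * a * b = b * a * b * a := by
  have hsplit : (a * b) ^ 4 = a * b * a * b * (a * b * a * b) := by
    simp only [pow_succ, pow_zero, one_mul, mul_assoc]
  rw [hsplit, mul_eq_one_iff_eq_inv]
  simp only [mul_inv_rev, inv_eq_of_mul_eq_one_left ha, inv_eq_of_mul_eq_one_left hb, mul_assoc]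

end Involutions

/-- A sequence in a group whose first `n` terms satisfy the Coxeter relations of type `Bₙ`. The
labelling is opposite to Bourbaki's, so that the bond of order `4` joins the terms `0` and `1` and
the first `m` terms satisfy the relations of type `B_m`. -/
structure IsTypeBSeq {G : Type*} [Group G] (n : ℕ) (r : ℕ → G) : Prop where
  mul_self : ∀ i < n, r i * r i = 1
  commute : ∀ i j, i + 1 < j → j < n → Commute (r i) (r j)
  braid : ∀ i, 0 < i → i + 1 < n → r i * r (i + 1) * r i = r (i + 1) * r i * r (i + 1)
  braid_four : 1 < n → r 0 * r 1 * r 0 * r 1 = r 1 * r 0 * r 1 * r 0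

/-- The subgroup generated by the first `m` terms of a sequence: for the reversed simple reflections
of type `Bₙ`, the standard parabolic subgroup of type `B_m`. -/
def initialSubgroup {G : Type*} [Group G] (r : ℕ → G) (m : ℕ) : Subgroup G :=
  Subgroup.closure (r '' Set.Iio m)

/-- The palindromic product `r m ⋯ r 1 * r 0 * r 1 ⋯ r m`: for the reversed simple reflections of
type `Bₙ`, the reflection that negates the coordinate `m`. -/
def palindrome {G : Type*} [Group G] (r : ℕ → G) : ℕ → G
  | 0 => r 0
  | m + 1 => r (m + 1) * palindrome r m * r (m + 1)

/-- The product of the first `m` palindromes, which turns out to be the longest element of the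
parabolic subgroup of type `B_m`. -/
def palindromeProd {G : Type*} [Group G] (r : ℕ → G) : ℕ → G
  | 0 => 1
  | m + 1 => palindromeProd r m * palindrome r m

/-- The union of the double cosets of `initialSubgroup r m` through `1`, `r m` and `palindrome r m`.
In type `B` these are all the double cosets in `initialSubgroup r (m + 1)`: they correspond to the
orbits of the stabilizer of the coordinate vector `e_m` on `{± e_0, …, ± e_m}`. -/
def doubleCosetUnion {G : Type*} [Group G] (r : ℕ → G) (m : ℕ) : Set G :=
  ⋃ d ∈ ({1, r m, palindrome r m} : Set G),
    DoubleCoset.doubleCoset d (initialSubgroup r m) (initialSubgroup r m)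

section Sequences

variable {G H : Type*} [Group G] [Group H] {n m : ℕ} {r : ℕ → G}

lemma mem_initialSubgroup {i : ℕ} (hi : i < m) : r i ∈ initialSubgroup r m :=
  Subgroup.subset_closure ⟨i, hi, rfl⟩

lemma initialSubgroup_zero : initialSubgroup r 0 = ⊥ := by
  simp [initialSubgroup]

lemma initialSubgroup_mono : Monotone (initialSubgroup r) := fun _ _ h =>
  Subgroup.closure_mono (Set.image_mono (Set.Iio_subset_Iio h))

lemma palindrome_mem (m : ℕ) : palindrome r m ∈ initialSubgroup r (m + 1) := by
  induction m with
  | zero => exact mem_initialSubgroup zero_lt_one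
  | succ m ih =>
    have hr : r (m + 1) ∈ initialSubgroup r (m + 2) := mem_initialSubgroup (by omega)
    exact mul_mem (mul_mem hr (initialSubgroup_mono (by omega) ih)) hr

lemma palindromeProd_mem (m : ℕ) : palindromeProd r m ∈ initialSubgroup r m := by
  induction m with
  | zero => exact one_mem _
  | succ m ih => exact mul_mem (initialSubgroup_mono (by omega) ih) (palindrome_mem m)

lemma palindrome_mul_self (hr : ∀ i ≤ m, r i * r i = 1) :
    palindrome r m * palindrome r m = 1 := by
  induction m with
  | zero => exact hr 0 le_rfl
  | succ m ih =>
    calc r (m + 1) * palindrome r m * r (m + 1) * (r (m + 1) * palindrome r m * r (m + 1))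
      _ = r (m + 1) * palindrome r m * (r (m + 1) * r (m + 1)) * palindrome r m * r (m + 1) := by
        simp only [mul_assoc]
      _ = r (m + 1) * (palindrome r m * palindrome r m) * r (m + 1) := by
        rw [hr _ le_rfl, mul_one, mul_assoc (r (m + 1))]
      _ = 1 := by rw [ih fun i hi => hr i (by omega), mul_one, hr _ le_rfl]

lemma palindrome_eq_conj (hr : ∀ i ≤ m, r i * r i = 1) :
    palindrome r m = ((List.range m).map fun k => r (m - k)).prod * r 0 *
      ((List.range m).map fun k => r (m - k)).prod⁻¹ := by
  induction m with
  | zero => simp [palindrome]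
  | succ m ih =>
    rw [palindrome, ih fun i hi => hr i (by omega), List.range_succ_eq_map]
    simp only [List.map_cons, List.map_map, List.prod_cons, Function.comp_def, Nat.succ_eq_add_one,
      Nat.add_sub_add_right, mul_inv_rev, Nat.sub_zero,
      inv_eq_of_mul_eq_one_left (hr (m + 1) le_rfl), mul_assoc]

lemma map_palindrome (φ : G →* H) {s : ℕ → H} (hφ : ∀ i ≤ m, φ (r i) = s i) :
    φ (palindrome r m) = palindrome s m := by
  induction m with
  | zero => exact hφ 0 le_rfl
  | succ m ih => simp only [palindrome, map_mul, hφ _ le_rfl, ih fun i hi => hφ i (by omega)]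

lemma map_palindromeProd (φ : G →* H) {s : ℕ → H} (hφ : ∀ i < m, φ (r i) = s i) :
    φ (palindromeProd r m) = palindromeProd s m := by
  induction m with
  | zero => exact map_one φ
  | succ m ih =>
    rw [palindromeProd, palindromeProd, map_mul, ih fun i hi => hφ i (by omega),
      map_palindrome φ fun i hi => hφ i (by omega)]

lemma commute_of_mem_initialSubgroup {g x : G} (hg : ∀ i < m, Commute g (r i))
    (hx : x ∈ initialSubgroup r m) : Commute g x := by
  have hle : initialSubgroup r m ≤ Subgroup.centralizer {g} := by
    refine (Subgroup.closure_le _).mpr ?_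
    rintro _ ⟨i, hi, rfl⟩
    exact Subgroup.mem_centralizer_singleton_iff.mpr (hg i hi).eq.symm
  exact (Subgroup.mem_centralizer_singleton_iff.mp (hle hx)).symm

lemma mem_doubleCosetUnion {x : G} : x ∈ doubleCosetUnion r m ↔
    ∃ d ∈ ({1, r m, palindrome r m} : Set G), ∃ u ∈ initialSubgroup r m,
      ∃ v ∈ initialSubgroup r m, x = u * d * v := by
  simp only [doubleCosetUnion, Set.mem_iUnion₂, DoubleCoset.mem_doubleCoset, SetLike.mem_coe,
    exists_prop]

lemma mul_mem_doubleCosetUnion {u v x : G} (hu : u ∈ initialSubgroup r m)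
    (hx : x ∈ doubleCosetUnion r m) (hv : v ∈ initialSubgroup r m) :
    u * x * v ∈ doubleCosetUnion r m := by
  obtain ⟨d, hd, a, ha, b, hb, rfl⟩ := mem_doubleCosetUnion.mp hx
  exact mem_doubleCosetUnion.mpr
    ⟨d, hd, u * a, mul_mem hu ha, b * v, mul_mem hb hv, by simp only [mul_assoc]⟩

lemma subset_doubleCosetUnion :
    ({1, r m, palindrome r m} : Set G) ⊆ doubleCosetUnion r m := fun d hd =>
  mem_doubleCosetUnion.mpr ⟨d, hd, 1, one_mem _, 1, one_mem _, by simp⟩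

lemma doubleCosetUnion_subset : doubleCosetUnion r m ⊆ initialSubgroup r (m + 1) := by
  rintro x hx
  obtain ⟨d, hd, u, hu, v, hv, rfl⟩ := mem_doubleCosetUnion.mp hx
  have hd' : d ∈ initialSubgroup r (m + 1) := by
    rcases hd with rfl | rfl | rfl
    exacts [one_mem _, mem_initialSubgroup m.lt_succ_self, palindrome_mem m]
  have hmono : initialSubgroup r m ≤ initialSubgroup r (m + 1) := initialSubgroup_mono m.le_succ
  exact mul_mem (mul_mem (hmono hu) hd') (hmono hv)

namespace IsTypeBSeq

variable (h : IsTypeBSeq n r)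
include h

lemma commute_of_mem {j : ℕ} (hmj : m < j) (hj : j < n) {x : G} (hx : x ∈ initialSubgroup r m) :
    Commute (r j) x :=
  commute_of_mem_initialSubgroup (fun i _ => (h.commute i j (by omega) hj).symm) hx

lemma commute_palindrome (hm : m < n) {i : ℕ} (hi : i < m) : Commute (palindrome r m) (r i) := by
  induction m generalizing i with
  | zero => omega
  | succ m ih =>
    rcases Nat.lt_succ_iff_lt_or_eq.mp hi with hi' | rfl
    · have hcomm : Commute (r (m + 1)) (r i) := (h.commute i (m + 1) (by omega) hm).symm
      exact (hcomm.mul_left (ih (by omega) hi')).mul_left hcomm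
    · cases i with
      | zero => simpa only [palindrome, commute_iff_eq, zero_add, mul_assoc] using
          (h.braid_four hm).symm
      | succ k =>
        have hbraid := h.braid (k + 1) (by omega) hm
        -- Moving `r (k + 1)` past `r (k + 1) * r (k + 2)` turns it into `r (k + 2)`, which commutes
        -- with the inner palindrome and is turned back by `r (k + 2) * r (k + 1)`.
        have hright : SemiconjBy (r (k + 1) * r (k + 2)) (r (k + 1)) (r (k + 2)) := by
          simpa only [SemiconjBy, mul_assoc] using hbraid
        have hmid : SemiconjBy (palindrome r k) (r (k + 2)) (r (k + 2)) :=
          (h.commute_of_mem (by omega) hm (palindrome_mem k)).symm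
        have hleft : SemiconjBy (r (k + 2) * r (k + 1)) (r (k + 2)) (r (k + 1)) := by
          simpa only [SemiconjBy, mul_assoc] using hbraid.symm
        simpa only [palindrome, mul_assoc] using! (hleft.mul_left hmid).mul_left hright

lemma commute_palindrome_of_mem (hm : m < n) {x : G} (hx : x ∈ initialSubgroup r m) :
    Commute (palindrome r m) x :=
  commute_of_mem_initialSubgroup (fun _ hi => h.commute_palindrome hm hi) hx

lemma palindromeProd_mul_self (hm : m ≤ n) : palindromeProd r m * palindromeProd r m = 1 := by
  induction m with
  | zero => exact one_mul 1
  | succ m ih =>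
    have hcomm := h.commute_palindrome_of_mem hm (palindromeProd_mem m)
    rw [palindromeProd, hcomm.mul_mul_mul_comm, ih (by omega),
      palindrome_mul_self fun i hi => h.mul_self i (by omega), one_mul]

lemma palindromeProd_mul_palindromeProd_succ (hm : m ≤ n) :
    palindromeProd r m * palindromeProd r (m + 1) = palindrome r m := by
  rw [palindromeProd, ← mul_assoc, h.palindromeProd_mul_self hm, one_mul]

lemma conj_mem_doubleCosetUnion (hm : m + 1 < n) {d : G}
    (hd : d ∈ ({1, r m, palindrome r m} : Set G)) :
    r (m + 1) * d * r (m + 1) ∈ doubleCosetUnion r (m + 1) := by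
  have hpal : r (m + 1) * palindrome r m * r (m + 1) ∈ doubleCosetUnion r (m + 1) :=
    subset_doubleCosetUnion (Or.inr (Or.inr rfl))
  rcases hd with rfl | rfl | rfl
  · rw [mul_one, h.mul_self _ hm]
    exact subset_doubleCosetUnion (Or.inl rfl)
  · cases m with
    | zero => exact hpal
    | succ k =>
      have hr : r (k + 1) ∈ initialSubgroup r (k + 2) := mem_initialSubgroup (by omega)
      rw [← h.braid (k + 1) (by omega) hm]
      exact mul_mem_doubleCosetUnion hr (subset_doubleCosetUnion (Or.inr (Or.inl rfl))) hr
  · exact hpal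

lemma mul_mem_doubleCosetUnion_succ (hm : m + 1 < n)
    (ih : (initialSubgroup r (m + 1) : Set G) ⊆ doubleCosetUnion r m) {x : G}
    (hx : x ∈ doubleCosetUnion r (m + 1)) : x * r (m + 1) ∈ doubleCosetUnion r (m + 1) := by
  obtain ⟨d, hd, u, hu, v, hv, rfl⟩ := mem_doubleCosetUnion.mp hx
  rcases hd with rfl | rfl | rfl
  · exact mem_doubleCosetUnion.mpr
      ⟨r (m + 1), Or.inr (Or.inl rfl), u * v, mul_mem hu hv, 1, one_mem _, by simp⟩
  · obtain ⟨d, hd, a, ha, b, hb, rfl⟩ := mem_doubleCosetUnion.mp (ih hv)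
    have hmono : initialSubgroup r m ≤ initialSubgroup r (m + 1) := initialSubgroup_mono m.le_succ
    have hmove : u * r (m + 1) * (a * d * b) * r (m + 1) =
        u * a * (r (m + 1) * d * r (m + 1)) * b := by
      have hra := h.commute_of_mem m.lt_succ_self hm ha
      have hrb := h.commute_of_mem m.lt_succ_self hm hb
      calc u * r (m + 1) * (a * d * b) * r (m + 1)
        _ = u * (r (m + 1) * a) * d * (b * r (m + 1)) := by simp only [mul_assoc]
        _ = u * a * (r (m + 1) * d * r (m + 1)) * b := by
          rw [hra.eq, ← hrb.eq]
          simp only [mul_assoc]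
    rw [hmove]
    exact mul_mem_doubleCosetUnion (mul_mem hu (hmono ha)) (h.conj_mem_doubleCosetUnion hm hd)
      (hmono hb)
  · refine mem_doubleCosetUnion.mpr ⟨r (m + 1), Or.inr (Or.inl rfl), u * v, mul_mem hu hv,
      palindrome r m, palindrome_mem m, ?_⟩
    calc u * palindrome r (m + 1) * v * r (m + 1)
      _ = u * v * (palindrome r (m + 1) * r (m + 1)) := by
        rw [mul_assoc u, (h.commute_palindrome_of_mem hm hv).eq, ← mul_assoc u, mul_assoc (u * v)]
      _ = u * v * r (m + 1) * palindrome r m := by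
        simp only [palindrome, mul_assoc, h.mul_self _ hm, mul_one]

lemma mul_mem_doubleCosetUnion_zero (hn : 0 < n) {x : G} (hx : x ∈ doubleCosetUnion r 0) :
    x * r 0 ∈ doubleCosetUnion r 0 := by
  simp only [mem_doubleCosetUnion, initialSubgroup_zero, Subgroup.mem_bot, palindrome,
    Set.mem_insert_iff, Set.mem_singleton_iff, or_self, exists_eq_left, one_mul, mul_one] at hx ⊢
  rcases hx with ⟨d, rfl | rfl, rfl⟩
  · exact ⟨r 0, Or.inr rfl, one_mul _⟩
  · exact ⟨1, Or.inl rfl, h.mul_self 0 hn⟩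

lemma coe_initialSubgroup_succ_of_mul_mem (hm : m < n)
    (hmul : ∀ x ∈ doubleCosetUnion r m, x * r m ∈ doubleCosetUnion r m) :
    (initialSubgroup r (m + 1) : Set G) = doubleCosetUnion r m := by
  refine Set.Subset.antisymm (fun w hw => ?_) doubleCosetUnion_subset
  have hstep : ∀ i < m + 1, ∀ x ∈ doubleCosetUnion r m, x * r i ∈ doubleCosetUnion r m := by
    intro i hi x hx
    rcases Nat.lt_succ_iff_lt_or_eq.mp hi with hi' | rfl
    · simpa only [one_mul] using
        mul_mem_doubleCosetUnion (one_mem _) hx (mem_initialSubgroup hi')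
    · exact hmul x hx
  induction hw using Subgroup.closure_induction_right with
  | one => exact subset_doubleCosetUnion (Or.inl rfl)
  | mul_right x _ y hy hx =>
    obtain ⟨i, hi, rfl⟩ := hy
    exact hstep i hi x hx
  | mul_inv_cancel x _ y hy hx =>
    obtain ⟨i, hi, rfl⟩ := hy
    rw [inv_eq_of_mul_eq_one_left (h.mul_self i (lt_of_lt_of_le hi hm))]
    exact hstep i hi x hx

theorem coe_initialSubgroup_succ (hm : m < n) :
    (initialSubgroup r (m + 1) : Set G) = doubleCosetUnion r m := by
  induction m with
  | zero =>
    exact h.coe_initialSubgroup_succ_of_mul_mem hm fun x => h.mul_mem_doubleCosetUnion_zero hm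
  | succ m ih =>
    exact h.coe_initialSubgroup_succ_of_mul_mem hm fun x =>
      h.mul_mem_doubleCosetUnion_succ hm (ih (by omega)).subset

end IsTypeBSeq

section Length

variable {len : G → ℕ} (hmul : ∀ x y, len (x * y) ≤ len x + len y) (hr : ∀ i, len (r i) ≤ 1)
include hmul hr

lemma length_palindrome_le (m : ℕ) : len (palindrome r m) ≤ 2 * m + 1 := by
  induction m with
  | zero => exact hr 0
  | succ m ih =>
    calc len (r (m + 1) * palindrome r m * r (m + 1))
      _ ≤ len (r (m + 1)) + len (palindrome r m) + len (r (m + 1)) :=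
        (hmul _ _).trans (Nat.add_le_add_right (hmul _ _) _)
      _ ≤ 1 + (2 * m + 1) + 1 := by gcongr <;> exact hr _
      _ = 2 * (m + 1) + 1 := by ring

variable (h1 : len 1 = 0)
include h1

lemma length_palindromeProd_le (m : ℕ) : len (palindromeProd r m) ≤ m ^ 2 := by
  induction m with
  | zero => exact h1.le
  | succ m ih =>
    calc len (palindromeProd r m * palindrome r m)
      _ ≤ len (palindromeProd r m) + len (palindrome r m) := hmul _ _
      _ ≤ m ^ 2 + (2 * m + 1) := Nat.add_le_add ih (length_palindrome_le hmul hr m)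
      _ = (m + 1) ^ 2 := by ring

namespace IsTypeBSeq

variable (h : IsTypeBSeq n r)
include h

lemma exists_eq_mul_palindrome_or_length_le (hm : m < n) {w : G}
    (hw : w ∈ initialSubgroup r (m + 1)) :
    ∃ u ∈ initialSubgroup r m, ∃ d, w = u * d ∧ (d = palindrome r m ∨ len d ≤ 2 * m) := by
  induction m generalizing w with
  | zero =>
    obtain ⟨d, hd, u, hu, v, hv, rfl⟩ :=
      mem_doubleCosetUnion.mp ((h.coe_initialSubgroup_succ hm).subset hw)
    rw [initialSubgroup_zero, Subgroup.mem_bot] at hu hv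
    subst hu hv
    rcases hd with rfl | hd
    · exact ⟨1, one_mem _, 1, mul_one _, Or.inr (by omega)⟩
    · exact ⟨1, one_mem _, d, mul_one _, Or.inl (hd.elim id id)⟩
  | succ m ih =>
    obtain ⟨d, hd, u, hu, v, hv, rfl⟩ :=
      mem_doubleCosetUnion.mp ((h.coe_initialSubgroup_succ hm).subset hw)
    rcases hd with rfl | rfl | rfl
    · exact ⟨u * v, mul_mem hu hv, 1, by simp, Or.inr (by omega)⟩
    · obtain ⟨a, ha, d, rfl, hd⟩ := ih (by omega) hv
      have hra := h.commute_of_mem m.lt_succ_self hm ha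
      refine ⟨u * a, mul_mem hu (initialSubgroup_mono m.le_succ ha), r (m + 1) * d, ?_, Or.inr ?_⟩
      · simp only [mul_assoc, hra.left_comm]
      · have hlen : len d ≤ 2 * m + 1 := by
          rcases hd with rfl | hd
          exacts [length_palindrome_le hmul hr m, hd.trans (by omega)]
        calc len (r (m + 1) * d)
          _ ≤ len (r (m + 1)) + len d := hmul _ _
          _ ≤ 1 + (2 * m + 1) := Nat.add_le_add (hr _) hlen
          _ = 2 * (m + 1) := by ring
    · refine ⟨u * v, mul_mem hu hv, palindrome r (m + 1), ?_, Or.inl rfl⟩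
      rw [mul_assoc, (h.commute_palindrome_of_mem hm hv).eq, mul_assoc]

theorem eq_palindromeProd_or_length_lt (hm : m ≤ n) {w : G} (hw : w ∈ initialSubgroup r m) :
    w = palindromeProd r m ∨ len w < m ^ 2 := by
  induction m generalizing w with
  | zero => exact Or.inl (by simpa [initialSubgroup_zero, palindromeProd] using hw)
  | succ m ih =>
    obtain ⟨u, hu, d, rfl, hd⟩ := h.exists_eq_mul_palindrome_or_length_le hmul hr h1 hm hw
    have hmul_ud := hmul u d
    have hsq : (m + 1) ^ 2 = m ^ 2 + (2 * m + 1) := by ring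
    have hpal := length_palindrome_le hmul hr m
    have hprod := length_palindromeProd_le hmul hr h1 m
    rcases ih (by omega) hu, hd with ⟨rfl | hu', rfl | hd'⟩
    · exact Or.inl rfl
    all_goals exact Or.inr (by omega)

end IsTypeBSeq

end Length

end Sequences

section CoxeterSystems

variable {B W : Type*} [Group W] {M : CoxeterMatrix B} (cs : CoxeterSystem M W)

lemma le_add_length_of_simple_mul_le {f : W → ℕ} (hf : ∀ i w, f (cs.simple i * w) ≤ f w + 1)
    (w : W) : f w ≤ f 1 + cs.length w := by
  obtain ⟨ω, hω, rfl⟩ := cs.exists_isReduced w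
  rw [hω.eq]
  clear hω
  induction ω with
  | nil => simp
  | cons i ω ih =>
    rw [cs.wordProd_cons, List.length_cons]
    exact (hf i _).trans (by omega)

lemma one_le_length_of_isConj_simple {i : B} {v : W} (hv : IsConj (cs.simple i) v) :
    1 ≤ cs.length v := by
  rw [Nat.one_le_iff_ne_zero, Ne, cs.length_eq_zero_iff]
  rintro rfl
  have hsimple := cs.length_simple i
  rw [isConj_one_left.mp hv, cs.length_one] at hsimple
  exact zero_ne_one hsimple

theorem setOf_minimal_length_isConj {i : B} {x : W} (hx : IsConj (cs.simple i) x) :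
    {w | IsConj x w ∧ ∀ v, IsConj x v → cs.length w ≤ cs.length v} =
      cs.simple '' {j | IsConj x (cs.simple j)} := by
  have hpos : ∀ v, IsConj x v → 1 ≤ cs.length v := fun v hv =>
    one_le_length_of_isConj_simple cs (hx.trans hv)
  ext w
  constructor
  · rintro ⟨hw, hmin⟩
    have hle : cs.length w ≤ 1 := cs.length_simple i ▸ hmin _ hx.symm
    obtain ⟨j, rfl⟩ := cs.length_eq_one_iff.mp (le_antisymm hle (hpos w hw))
    exact ⟨j, hw, rfl⟩
  · rintro ⟨j, hj, rfl⟩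
    exact ⟨hj, fun v hv => (cs.length_simple j).trans_le (hpos v hv)⟩

end CoxeterSystems

lemma coxeterMatrix_B_rev_rev {n : ℕ} (i j : Fin n) : CoxeterMatrix.B n i.rev j.rev =
    if i = j then 1
    else if ((i : ℕ) = 0 ∧ (j : ℕ) = 1) ∨ ((j : ℕ) = 0 ∧ (i : ℕ) = 1) then 4
    else if (j : ℕ) + 1 = i ∨ (i : ℕ) + 1 = j then 3 else 2 := by
  have hB : ∀ i j : Fin n, CoxeterMatrix.B n i j = if i = j then 1
    else if ((i : ℕ) = n - 1 ∧ (j : ℕ) = n - 2) ∨ ((j : ℕ) = n - 1 ∧ (i : ℕ) = n - 2) then 4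
    else if (j : ℕ) + 1 = i ∨ (i : ℕ) + 1 = j then 3 else 2 := fun _ _ => rfl
  rw [hB]
  simp only [Fin.val_rev, Fin.ext_iff]
  grind

section Liftable

variable {G : Type*} [Group G] {n : ℕ} {r : ℕ → G}

lemma isTypeBSeq_of_isLiftable
    (h : (CoxeterMatrix.B n).IsLiftable fun i : Fin n => r i.rev) : IsTypeBSeq n r := by
  have hpow : ∀ i j (hi : i < n) (hj : j < n),
      (r i * r j) ^ CoxeterMatrix.B n (Fin.rev ⟨i, hi⟩) (Fin.rev ⟨j, hj⟩) = 1 := by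
    intro i j hi hj
    simpa only [Fin.rev_rev] using h (Fin.rev ⟨i, hi⟩) (Fin.rev ⟨j, hj⟩)
  simp only [coxeterMatrix_B_rev_rev, Fin.ext_iff] at hpow
  have hsq : ∀ i < n, r i * r i = 1 := fun i hi => by simpa using hpow i i hi hi
  refine ⟨hsq, fun i j hij hj => ?_, fun i hi hin => ?_, fun hn => ?_⟩
  · rw [← mul_pow_two_eq_one_iff_commute (hsq i (by omega)) (hsq j hj)]
    have := hpow i j (by omega) hj
    rwa [if_neg (by omega), if_neg (by omega), if_neg (by omega)] at this
  · rw [← mul_pow_three_eq_one_iff_braid (hsq i (by omega)) (hsq _ hin)]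
    have := hpow i (i + 1) (by omega) hin
    rwa [if_neg (by omega), if_neg (by omega), if_pos (by omega)] at this
  · rw [← mul_pow_four_eq_one_iff_braid (hsq 0 (by omega)) (hsq 1 hn)]
    simpa using hpow 0 1 (by omega) hn

lemma IsTypeBSeq.isLiftable (h : IsTypeBSeq n r) :
    (CoxeterMatrix.B n).IsLiftable fun i : Fin n => r i.rev := by
  intro i j
  obtain ⟨i, rfl⟩ := Fin.rev_surjective i
  obtain ⟨j, rfl⟩ := Fin.rev_surjective j
  simp only [Fin.rev_rev, coxeterMatrix_B_rev_rev]
  have hi := h.mul_self i i.isLt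
  have hj := h.mul_self j j.isLt
  split_ifs with hij hfour hthree
  · rw [hij, pow_one, hj]
  · rw [mul_pow_four_eq_one_iff_braid hi hj]
    rcases hfour with ⟨h0, h1⟩ | ⟨h0, h1⟩
    · simpa only [h0, h1] using h.braid_four (h1 ▸ j.isLt)
    · simpa only [h0, h1] using (h.braid_four (h1 ▸ i.isLt)).symm
  · rw [mul_pow_three_eq_one_iff_braid hi hj]
    rcases hthree with hji | hij
    · rw [← hji]
      exact (h.braid j (by omega) (by omega)).symm
    · rw [← hij]
      exact h.braid i (by omega) (by omega)
  · rw [mul_pow_two_eq_one_iff_commute hi hj]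
    rcases lt_or_gt_of_ne (Fin.val_ne_of_ne hij) with hlt | hlt
    · exact h.commute i j (by omega) j.isLt
    · exact (h.commute j i (by omega) i.isLt).symm

end Liftable

/-- The action of the reversed simple reflections of type `B` on integer vectors by signed
permutations: `0` negates the coordinate `0` and `i + 1` exchanges the coordinates `i`
and `i + 1`. -/
def signedPermGenerator : ℕ → Equiv.Perm (ℕ → ℤ)
  | 0 => Equiv.piCongrRight (Pi.mulSingle 0 (Equiv.neg ℤ))
  | i + 1 => (Equiv.swap i (i + 1)).arrowCongr (Equiv.refl ℤ)

lemma signedPermGenerator_zero_apply (v : ℕ → ℤ) (k : ℕ) :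
    signedPermGenerator 0 v k = if k = 0 then -v k else v k := by
  rcases eq_or_ne k 0 with rfl | hk
  · simp [signedPermGenerator]
  · simp [signedPermGenerator, hk]

lemma signedPermGenerator_succ_apply (i : ℕ) (v : ℕ → ℤ) (k : ℕ) :
    signedPermGenerator (i + 1) v k = v (Equiv.swap i (i + 1) k) := rfl

lemma isTypeBSeq_signedPermGenerator (n : ℕ) : IsTypeBSeq n signedPermGenerator where
  mul_self i _ := by
    ext v k
    cases i with
    | zero =>
      simp only [Equiv.Perm.mul_apply, Equiv.Perm.one_apply, signedPermGenerator_zero_apply]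
      grind
    | succ i => simp [signedPermGenerator_succ_apply]
  commute i j hij _ := by
    obtain ⟨j, rfl⟩ : ∃ k, j = k + 1 := ⟨j - 1, by omega⟩
    ext v k
    cases i <;>
      simp only [Equiv.Perm.mul_apply, signedPermGenerator_zero_apply,
        signedPermGenerator_succ_apply, Equiv.swap_apply_def] <;>
      grind
  braid i hi _ := by
    obtain ⟨i, rfl⟩ : ∃ k, i = k + 1 := ⟨i - 1, by omega⟩
    ext v k
    simp only [Equiv.Perm.mul_apply, signedPermGenerator_succ_apply, Equiv.swap_apply_def]
    grind
  braid_four _ := by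
    ext v k
    simp only [Equiv.Perm.mul_apply, signedPermGenerator_zero_apply,
      signedPermGenerator_succ_apply 0, Equiv.swap_apply_def]
    grind

lemma palindrome_signedPermGenerator_apply (m : ℕ) (v : ℕ → ℤ) (k : ℕ) :
    palindrome signedPermGenerator m v k = if k = m then -v k else v k := by
  induction m generalizing v k with
  | zero => exact signedPermGenerator_zero_apply v k
  | succ m ih =>
    simp only [palindrome, Equiv.Perm.mul_apply, signedPermGenerator_succ_apply, ih,
      Equiv.swap_apply_def]
    grind

lemma palindromeProd_signedPermGenerator_apply (m : ℕ) (v : ℕ → ℤ) (k : ℕ) :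
    palindromeProd signedPermGenerator m v k = if k < m then -v k else v k := by
  induction m generalizing v k with
  | zero => rfl
  | succ m ih =>
    simp only [palindromeProd, Equiv.Perm.mul_apply, ih, palindrome_signedPermGenerator_apply]
    grind

/-- The positive roots of type `Bₙ` that are negative on `v`: a pair `(i, j)` stands for the root
`e_j - e_i` if `i < j`, for `e_i + e_j` if `j < i`, and for `e_i` if `i = j`. -/
def typeBInversions (n : ℕ) (v : ℕ → ℤ) : Finset (ℕ × ℕ) :=
  {p ∈ Finset.range n ×ˢ Finset.range n | if p.1 < p.2 then v p.2 < v p.1 else v p.1 + v p.2 < 0}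

lemma mem_typeBInversions {n i j : ℕ} {v : ℕ → ℤ} : (i, j) ∈ typeBInversions n v ↔
    (i < n ∧ j < n) ∧ if i < j then v j < v i else v i + v j < 0 := by
  simp only [typeBInversions, Finset.mem_filter, Finset.mem_product, Finset.mem_range]

lemma card_le_card_add_one_of_forall_exists {α β : Type*} {s : Finset α} {t : Finset β} (a : α)
    (g : β → α) (h : ∀ x ∈ s, x ≠ a → ∃ y ∈ t, g y = x) : s.card ≤ t.card + 1 := by
  classical
  have hsub : s ⊆ insert a (t.image g) := fun x hx => by
    rw [Finset.mem_insert, Finset.mem_image, or_iff_not_imp_left]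
    exact h x hx
  exact (Finset.card_le_card hsub).trans
    ((Finset.card_insert_le _ _).trans (Nat.add_le_add_right Finset.card_image_le 1))

lemma card_typeBInversions_signedPermGenerator_le {n i : ℕ} (hi : i < n) (v : ℕ → ℤ) :
    (typeBInversions n (signedPermGenerator i v)).card ≤ (typeBInversions n v).card + 1 := by
  -- A simple reflection permutes the positive roots other than its own, the exceptional pair below.
  cases i with
  | zero =>
    refine card_le_card_add_one_of_forall_exists (0, 0)
      (fun p => if p.1 = 0 ∨ p.2 = 0 then p.swap else p) ?_
    rintro ⟨a, b⟩ hp hne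
    refine ⟨if a = 0 ∨ b = 0 then (b, a) else (a, b), ?_, ?_⟩
    · simp only [mem_typeBInversions, signedPermGenerator_zero_apply] at hp
      split_ifs <;> rw [mem_typeBInversions] <;> grind
    · grind
  | succ i =>
    let σ := Equiv.swap i (i + 1)
    refine card_le_card_add_one_of_forall_exists (i, i + 1)
      (fun p => if p = (i + 1, i) then p else (σ p.1, σ p.2)) ?_
    rintro ⟨a, b⟩ hp hne
    refine ⟨if (a, b) = (i + 1, i) then (a, b) else (σ a, σ b), ?_, ?_⟩
    · simp only [mem_typeBInversions, signedPermGenerator_succ_apply, Equiv.swap_apply_def] at hp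
      split_ifs <;> simp only [mem_typeBInversions, σ, Equiv.swap_apply_def] <;> grind
    · split_ifs with hab <;> grind

lemma typeBInversions_eq_empty (n : ℕ) : typeBInversions n (fun k => (k : ℤ) + 1) = ∅ := by
  ext ⟨i, j⟩
  rw [mem_typeBInversions]
  grind

lemma sq_le_card_typeBInversions {m n : ℕ} (hm : m ≤ n) {v : ℕ → ℤ}
    (hv : ∀ k < m, v k = -((k : ℤ) + 1)) : m ^ 2 ≤ (typeBInversions n v).card := by
  have hsub : Finset.range m ×ˢ Finset.range m ⊆ typeBInversions n v := by
    rintro ⟨i, j⟩ hij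
    rw [Finset.mem_product, Finset.mem_range, Finset.mem_range] at hij
    rw [mem_typeBInversions, hv i hij.1, hv j hij.2]
    grind
  calc m ^ 2
    _ = (Finset.range m ×ˢ Finset.range m).card := by
      rw [Finset.card_product, Finset.card_range, sq]
    _ ≤ (typeBInversions n v).card := Finset.card_le_card hsub

section TypeB

variable {n m : ℕ} {W : Type*} [Group W] (cs : CoxeterSystem (CoxeterMatrix.B n) W)

/-- The simple reflections of a Coxeter system of type `Bₙ` in the order opposite to Bourbaki's,
`s_n, s_{n-1}, …, s_1`, continued by the junk value `1`. -/
def revSimple (i : ℕ) : W :=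
  if h : i < n then cs.simple (Fin.rev ⟨i, h⟩) else 1

lemma revSimple_rev (i : Fin n) : revSimple cs i.rev = cs.simple i := by
  rw [revSimple, dif_pos i.rev.isLt, Fin.eta, Fin.rev_rev]

lemma revSimple_zero (hn : 0 < n) :
    revSimple cs 0 = cs.simple ⟨n - 1, Nat.sub_one_lt_of_lt hn⟩ := dif_pos hn

lemma length_revSimple_le (i : ℕ) : cs.length (revSimple cs i) ≤ 1 := by
  unfold revSimple
  split_ifs <;> simp

lemma isTypeBSeq_revSimple : IsTypeBSeq n (revSimple cs) :=
  isTypeBSeq_of_isLiftable fun i j => by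
    simpa only [revSimple_rev] using cs.simple_mul_simple_pow i j

lemma IsTypeBSeq.lift_revSimple {G : Type*} [Group G] {r : ℕ → G} (h : IsTypeBSeq n r) {i : ℕ}
    (hi : i < n) : cs.lift ⟨_, h.isLiftable⟩ (revSimple cs i) = r i := by
  rw [revSimple, dif_pos hi, CoxeterSystem.lift_apply_simple, Fin.rev_rev]

lemma initialSubgroup_revSimple_self : initialSubgroup (revSimple cs) n = ⊤ := by
  rw [eq_top_iff, ← cs.subgroup_closure_range_simple, Subgroup.closure_le]
  rintro _ ⟨i, rfl⟩
  rw [← revSimple_rev]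
  exact mem_initialSubgroup i.rev.isLt

lemma closure_simple_ne_zero (hn : 0 < n) :
    Subgroup.closure (cs.simple '' {j | j ≠ ⟨0, hn⟩}) = initialSubgroup (revSimple cs) (n - 1) := by
  refine le_antisymm ((Subgroup.closure_le _).mpr ?_) ((Subgroup.closure_le _).mpr ?_)
  · rintro _ ⟨i, hi, rfl⟩
    have hi : (i : ℕ) ≠ 0 := fun h => hi (Fin.ext h)
    rw [← revSimple_rev]
    exact mem_initialSubgroup (by rw [Fin.val_rev]; omega)
  · rintro _ ⟨i, hi, rfl⟩
    have hi : i < n - 1 := hi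
    rw [revSimple, dif_pos (by omega)]
    refine Subgroup.subset_closure ⟨_, fun h => ?_, rfl⟩
    have hval : n - (i + 1) = 0 := Fin.val_eq_of_eq h
    omega

lemma sq_le_length_palindromeProd_revSimple (hm : m ≤ n) :
    m ^ 2 ≤ cs.length (palindromeProd (revSimple cs) m) := by
  have hgen := isTypeBSeq_signedPermGenerator n
  let φ : W →* Equiv.Perm (ℕ → ℤ) := cs.lift ⟨_, hgen.isLiftable⟩
  let ρ : ℕ → ℤ := fun k => k + 1
  have hφ : ∀ i < n, φ (revSimple cs i) = signedPermGenerator i := fun i => hgen.lift_revSimple cs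
  have hstep : ∀ i w, (typeBInversions n (φ (cs.simple i * w) ρ)).card ≤
      (typeBInversions n (φ w ρ)).card + 1 := by
    intro i w
    rw [map_mul, ← revSimple_rev, hφ _ i.rev.isLt]
    exact card_typeBInversions_signedPermGenerator_le i.rev.isLt _
  have hneg : ∀ k < m, φ (palindromeProd (revSimple cs) m) ρ k = -((k : ℤ) + 1) := by
    intro k hk
    rw [map_palindromeProd φ fun i hi => hφ i (hi.trans_le hm),
      palindromeProd_signedPermGenerator_apply, if_pos hk]
  calc m ^ 2
    _ ≤ (typeBInversions n (φ (palindromeProd (revSimple cs) m) ρ)).card :=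
      sq_le_card_typeBInversions hm hneg
    _ ≤ (typeBInversions n (φ 1 ρ)).card + cs.length (palindromeProd (revSimple cs) m) :=
      le_add_length_of_simple_mul_le cs (f := fun w => (typeBInversions n (φ w ρ)).card) hstep _
    _ = cs.length (palindromeProd (revSimple cs) m) := by
      rw [map_one, Equiv.Perm.one_apply, typeBInversions_eq_empty, Finset.card_empty, zero_add]

theorem eq_palindromeProd_revSimple (hm : m ≤ n) {w : W}
    (hw : w ∈ initialSubgroup (revSimple cs) m)
    (hmax : ∀ v ∈ initialSubgroup (revSimple cs) m, cs.length v ≤ cs.length w) :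
    w = palindromeProd (revSimple cs) m := by
  refine ((isTypeBSeq_revSimple cs).eq_palindromeProd_or_length_lt cs.length_mul_le
    (length_revSimple_le cs) cs.length_one hm hw).resolve_right (not_lt.mpr ?_)
  exact (sq_le_length_palindromeProd_revSimple cs hm).trans (hmax _ (palindromeProd_mem m))

lemma isTypeBSeq_mulSingle_zero (n : ℕ) : IsTypeBSeq n (Pi.mulSingle 0 (-1 : ℤˣ)) where
  mul_self _ _ := Int.units_mul_self _
  commute _ _ _ _ := Commute.all _ _
  braid i hi _ := by simp [hi.ne']
  braid_four _ := by simp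

theorem isConj_simple_last_simple_iff (hn : 0 < n) {j : Fin n} :
    IsConj (cs.simple ⟨n - 1, Nat.sub_one_lt_of_lt hn⟩) (cs.simple j) ↔
      j = ⟨n - 1, Nat.sub_one_lt_of_lt hn⟩ := by
  refine ⟨fun h => ?_, by rintro rfl; rfl⟩
  have hsign := isTypeBSeq_mulSingle_zero n
  have hsign_eq := (cs.lift ⟨_, hsign.isLiftable⟩).map_isConj h
  rw [isConj_iff_eq, ← revSimple_zero cs hn, ← revSimple_rev cs j, hsign.lift_revSimple cs hn,
    hsign.lift_revSimple cs j.rev.isLt, Pi.mulSingle_eq_same] at hsign_eq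
  by_contra hj
  have hrev : (j.rev : ℕ) ≠ 0 := by
    have hval : (j : ℕ) ≠ n - 1 := Fin.val_ne_of_ne hj
    rw [Fin.val_rev]
    omega
  rw [Pi.mulSingle_eq_of_ne hrev] at hsign_eq
  exact absurd hsign_eq (by decide)

theorem setOf_minimal_length_isConj_last (hn : 0 < n) {x : W}
    (hx : IsConj (cs.simple ⟨n - 1, Nat.sub_one_lt_of_lt hn⟩) x) :
    {w | IsConj x w ∧ ∀ v, IsConj x v → cs.length w ≤ cs.length v} =
      {cs.simple ⟨n - 1, Nat.sub_one_lt_of_lt hn⟩} := by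
  have hiff : ∀ j, IsConj x (cs.simple j) ↔ j = ⟨n - 1, Nat.sub_one_lt_of_lt hn⟩ := fun j =>
    Iff.trans ⟨hx.trans, hx.symm.trans⟩ (isConj_simple_last_simple_iff cs hn)
  rw [setOf_minimal_length_isConj cs hx]
  simp only [hiff, Set.ofPred_eq_eq_singleton, Set.image_singleton]

end TypeB

lemma segB_eq_prod_revSimple {n : ℕ} (hn : 0 < n) : segB n 1 (n - 1) =
    ((List.range (n - 1)).map fun k => revSimple (csB n) (n - 1 - k)).prod := by
  obtain ⟨m, rfl⟩ : ∃ m, n = m + 1 := ⟨n - 1, by omega⟩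
  have hrange : List.range m = (List.range (m + 1)).filter fun k => 1 ≤ k + 1 ∧ k + 1 ≤ m := by
    rw [List.range_succ, List.filter_append, List.filter_eq_self.mpr (by simp)]
    simp
  rw [segB, Nat.add_sub_cancel, hrange, ← List.map_coe_finRange_eq_range, List.filter_map,
    List.map_map]
  refine congrArg List.prod (List.map_congr_left fun i _ => ?_)
  calc (csB (m + 1)).simple i
    _ = revSimple (csB (m + 1)) i.rev := (revSimple_rev (csB (m + 1)) i).symm
    _ = revSimple (csB (m + 1)) (m - i) := by rw [Fin.val_rev, Nat.add_sub_add_right]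

/-- In the Weyl group of type `Bₙ` (`n ≥ 2`, Bourbaki labels),
`w_{1,0}·w₀ = (s_1 ⋯ s_{n−1})·s_n·(s_1 ⋯ s_{n−1})⁻¹`, and the set of minimal length
elements of the conjugacy class of `w_{1,0}·w₀` is exactly `{s_n}`. -/
theorem typeB_w10_mul_w0 (n : ℕ) (hn : 2 ≤ n)
    (w₀ : WB n) (hw₀ : ∀ v : WB n, (csB n).length v ≤ (csB n).length w₀)
    (w₁ : WB n) (hw₁ : w₁ ∈ paraB n ⟨0, by omega⟩)
    (hw₁max : ∀ v ∈ paraB n ⟨0, by omega⟩, (csB n).length v ≤ (csB n).length w₁) :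
    w₁ * w₀ = segB n 1 (n - 1) * (csB n).simple ⟨n - 1, by omega⟩ * (segB n 1 (n - 1))⁻¹ ∧
    {w : WB n | IsConj (w₁ * w₀) w ∧
        ∀ v : WB n, IsConj (w₁ * w₀) v → (csB n).length w ≤ (csB n).length v}
      = {(csB n).simple ⟨n - 1, by omega⟩} := by
  have hB := isTypeBSeq_revSimple (csB n)
  have hpara : paraB n ⟨0, by omega⟩ = initialSubgroup (revSimple (csB n)) (n - 1) :=
    closure_simple_ne_zero (csB n) (by omega)
  have hlast : (csB n).simple ⟨n - 1, by omega⟩ = revSimple (csB n) 0 :=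
    (revSimple_zero (csB n) (by omega)).symm
  rw [hpara] at hw₁ hw₁max
  have hprod : w₁ * w₀ = palindrome (revSimple (csB n)) (n - 1) := by
    rw [eq_palindromeProd_revSimple (csB n) (by omega) hw₁ hw₁max,
      eq_palindromeProd_revSimple (csB n) le_rfl
        (initialSubgroup_revSimple_self (csB n) ▸ Subgroup.mem_top w₀) fun v _ => hw₀ v]
    simpa only [Nat.sub_add_cancel (show 1 ≤ n by omega)] using
      hB.palindromeProd_mul_palindromeProd_succ (n.sub_le 1)
  have hconj : w₁ * w₀ = segB n 1 (n - 1) * (csB n).simple ⟨n - 1, by omega⟩ *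
      (segB n 1 (n - 1))⁻¹ := by
    rw [hprod, hlast, segB_eq_prod_revSimple (by omega), palindrome_eq_conj]
    exact fun i hi => hB.mul_self i (by omega)
  exact ⟨hconj, setOf_minimal_length_isConj_last (csB n) (by omega)
    (isConj_iff.mpr ⟨_, hconj.symm⟩)⟩
end
end
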